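/- Let (a_1,…,a_n) be a proper sequence of integers with n ≥ 3 and let A ∈ SL(2,ℤ) satisfy A = ε·M(a_1,…,a_n) for some ε ∈ {1,−1}. Then for every B ∈ SL(2,ℤ) and every sequence of integers (d_1,…,d_m) with B·A·B^{−1} = ε'·M(d_1,…,d_m) for some ε' ∈ {1,−1}, one has m ≥ n; i.e. the proper presentation is minimal for the whole conjugacy class of A in PSL(2,ℤ). -/

import Mathlib

/-!
`M(c)` acts on slopes as `t ↦ c - 1/t`, so in the Farey graph `∞` and `M(c)·∞ = c` are adjacent,
and `M(c₁, …, cₘ)` moves `∞` by a distance of at most `m`. Conjugation changes the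
displacement of the powers of a matrix by a bounded amount, so it suffices that the powers of a
proper product move `∞` by the full length of their words.

This is a ping-pong argument. A vertex adjacent to a slope beyond an integer `α` has slope at
least `α` (possibly `∞`), so a walk can leave at most one at a time of a nested sequence of regions
obtained from `[α, ∞] ∪ [-∞, -β]` by applying the initial subwords. With `α, β ∈ {1, 2}`, where
`α = 2` at the positions right after a block `2, 3, …, 3` and `β = 2` right after a block
`-2, -3, …, -3`, the regions are nested because no entry `±2` closes such a block.
-/

/-- The continuant matrix `M(c)` for an integer `c`. -/
def M (c : ℤ) : Matrix (Fin 2) (Fin 2) ℤ := !![c, -1; 1, 0]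

/-- `M(c₁,…,cₙ) := M(c₁)·…·M(cₙ)`. -/
def Mseq (l : List ℤ) : Matrix (Fin 2) (Fin 2) ℤ := (l.map M).prod

/-- A sequence of integers is *proper* if (1) no entry lies in `{−1, 0, 1}`;
(2)-(4) regarded cyclically, it contains no contiguous block of the form
`(2, 3, …, 3, 2)` or `(−2, −3, …, −3, −2)` (with any number, possibly zero, of
middle entries — the case of zero middle entries being two cyclically consecutive
`2`'s resp. `−2`'s); and (5) no cyclic permutation of it equals `(2, 3, …, 3)`
or `(−2, −3, …, −3)`. -/
def Proper (c : List ℤ) : Prop :=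
  (∀ x ∈ c, x ≠ -1 ∧ x ≠ 0 ∧ x ≠ 1) ∧
  (∀ (k l : ℕ) (t : List ℤ), c.rotate k ≠ 2 :: (List.replicate l 3 ++ 2 :: t)) ∧
  (∀ (k l : ℕ) (t : List ℤ), c.rotate k ≠ -2 :: (List.replicate l (-3) ++ -2 :: t)) ∧
  (∀ k l : ℕ, c.rotate k ≠ 2 :: List.replicate l 3) ∧
  (∀ k l : ℕ, c.rotate k ≠ -2 :: List.replicate l (-3))

open Matrix

/-! ### The Farey graph -/

/-- The Farey graph, lifted from slopes to integer vectors: `u` stands for the slope `u 0 / u 1`,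
so every slope is represented by two opposite vectors, and non-primitive vectors are isolated. -/
def fareyGraph : SimpleGraph (Fin 2 → ℤ) where
  Adj u v := IsUnit (u 0 * v 1 - u 1 * v 0)
  symm := ⟨fun u v h => by
    rw [← IsUnit.neg_iff]
    convert h using 1
    ring⟩
  loopless := ⟨fun u h => by
    rw [mul_comm, sub_self] at h
    exact not_isUnit_zero h⟩

theorem fareyGraph_adj {u v : Fin 2 → ℤ} :
    fareyGraph.Adj u v ↔ IsUnit (u 0 * v 1 - u 1 * v 0) := Iff.rfl

theorem fareyGraph_adj_mulVec {P : Matrix (Fin 2) (Fin 2) ℤ} (hP : IsUnit P.det)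
    {u v : Fin 2 → ℤ} : fareyGraph.Adj (P *ᵥ u) (P *ᵥ v) ↔ fareyGraph.Adj u v := by
  have hdet : (P *ᵥ u) 0 * (P *ᵥ v) 1 - (P *ᵥ u) 1 * (P *ᵥ v) 0 =
      P.det * (u 0 * v 1 - u 1 * v 0) := by
    simp only [mulVec, dotProduct, Fin.sum_univ_two, det_fin_two]
    ring
  rw [fareyGraph_adj, hdet, IsUnit.mul_iff, and_iff_right hP, fareyGraph_adj]

theorem edist_mulVec_le {P : Matrix (Fin 2) (Fin 2) ℤ} (hP : IsUnit P.det) (u v : Fin 2 → ℤ) :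
    fareyGraph.edist (P *ᵥ u) (P *ᵥ v) ≤ fareyGraph.edist u v := by
  by_cases h : fareyGraph.Reachable u v
  · obtain ⟨p, hp⟩ := h.exists_walk_length_eq_edist
    let φ : fareyGraph →g fareyGraph := ⟨(P *ᵥ ·), (fareyGraph_adj_mulVec hP).mpr⟩
    rw [← hp, ← p.length_map φ]
    exact SimpleGraph.edist_le (p.map φ)
  · rw [SimpleGraph.edist_eq_top_of_not_reachable h]
    exact le_top

/-- Reduce a Bézout coefficient of `v 0` modulo `v 1`. -/
theorem exists_adj_natAbs_lt {v : Fin 2 → ℤ} (hv : IsCoprime (v 0) (v 1)) (h0 : v 1 ≠ 0) :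
    ∃ u, fareyGraph.Adj u v ∧ IsCoprime (u 0) (u 1) ∧ (u 1).natAbs < (v 1).natAbs := by
  obtain ⟨x, y, hxy⟩ := hv
  have hbez : (x % v 1) * v 0 + (y + x / v 1 * v 0) * v 1 = 1 := by
    linear_combination hxy + v 0 * Int.emod_add_mul_ediv x (v 1)
  refine ⟨![-(y + x / v 1 * v 0), x % v 1], ?_, ⟨-v 1, v 0, ?_⟩, ?_⟩
  · rw [fareyGraph_adj, Int.isUnit_iff]
    right
    simp only [cons_val_zero, cons_val_one]
    linear_combination -hbez
  · simp only [cons_val_zero, cons_val_one]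
    linear_combination hbez
  · have hnonneg := Int.emod_nonneg x h0
    have hlt := Int.emod_lt x h0
    change (x % v 1).natAbs < (v 1).natAbs
    omega

theorem reachable_of_isCoprime {v : Fin 2 → ℤ} (hv : IsCoprime (v 0) (v 1)) :
    fareyGraph.Reachable ![1, 0] v := by
  induction hn : (v 1).natAbs using Nat.strong_induction_on generalizing v with
  | _ n ih =>
    by_cases h0 : v 1 = 0
    · have hstart : fareyGraph.Adj ![1, 0] ![0, 1] := by simp [fareyGraph_adj]
      have hend : fareyGraph.Adj v ![0, 1] := by
        rw [h0, isCoprime_zero_right] at hv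
        simpa [fareyGraph_adj] using hv
      exact hstart.reachable.trans hend.symm.reachable
    · obtain ⟨u, huv, hu, hlt⟩ := exists_adj_natAbs_lt hv h0
      exact (ih _ (hn ▸ hlt) hu rfl).trans huv.reachable

theorem le_edist_of_antitone {V : Type*} {G : SimpleGraph V} {S : ℕ → Set V} (hS : Antitone S)
    (hadj : ∀ i u v, u ∈ S (i + 1) → G.Adj u v → v ∈ S i) {u v : V} {n : ℕ} (hu : u ∈ S n)
    (hv : v ∉ S 1) : (n : ℕ∞) ≤ G.edist u v := by
  have hwalk : ∀ {u v : V} (p : G.Walk u v) (i : ℕ), u ∈ S (i + p.length) → v ∈ S i := by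
    intro u v p
    induction p with
    | nil => exact fun i hi => hi
    | cons h p ih => exact fun i hi => ih i (hadj _ _ _ hi h)
  by_contra! hlt
  obtain ⟨p, hp⟩ := SimpleGraph.exists_walk_of_edist_ne_top (ne_top_of_lt hlt)
  rw [← hp, Nat.cast_lt] at hlt
  exact hv (hwalk p 1 (hS (by omega) hu))

/-! ### Displacement of the vertex at infinity -/

/-- The distance in the Farey graph by which a matrix moves the vertex `∞ = 1 / 0`. It is `⊤` if
the first column of the matrix is not primitive. -/
noncomputable def displacement (P : Matrix (Fin 2) (Fin 2) ℤ) : ℕ∞ :=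
  fareyGraph.edist ![1, 0] (P *ᵥ ![1, 0])

theorem displacement_one : displacement 1 = 0 := by
  rw [displacement, one_mulVec, SimpleGraph.edist_self]

theorem displacement_mul_le {P : Matrix (Fin 2) (Fin 2) ℤ} (hP : IsUnit P.det)
    (Q : Matrix (Fin 2) (Fin 2) ℤ) :
    displacement (P * Q) ≤ displacement P + displacement Q := by
  refine SimpleGraph.edist_triangle.trans (add_le_add le_rfl ?_)
  rw [← mulVec_mulVec]
  exact edist_mulVec_le hP _ _

theorem displacement_pow_le {P : Matrix (Fin 2) (Fin 2) ℤ} (hP : IsUnit P.det) (k : ℕ) :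
    displacement (P ^ k) ≤ k * displacement P := by
  induction k with
  | zero => simp [displacement_one]
  | succ k ih =>
    calc displacement (P ^ (k + 1))
        ≤ displacement (P ^ k) + displacement P := by
          rw [pow_succ]
          exact displacement_mul_le (by rw [det_pow]; exact hP.pow k) P
      _ ≤ k * displacement P + displacement P := add_le_add ih le_rfl
      _ = ((k + 1 : ℕ) : ℕ∞) * displacement P := by push_cast; ring

theorem displacement_ne_top {P : Matrix (Fin 2) (Fin 2) ℤ} (hP : IsUnit P.det) :
    displacement P ≠ ⊤ := by
  refine SimpleGraph.edist_ne_top_iff_reachable.mpr (reachable_of_isCoprime ?_)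
  obtain ⟨x, hx⟩ := hP.exists_left_inv
  refine ⟨x * P 1 1, -(x * P 0 1), ?_⟩
  rw [det_fin_two] at hx
  simp only [mulVec, dotProduct, Fin.sum_univ_two, cons_val_zero, cons_val_one]
  linear_combination hx

theorem exists_displacement_le_add_of_semiconjBy {B : Matrix (Fin 2) (Fin 2) ℤ}
    (hB : IsUnit B.det) :
    ∃ C : ℕ, ∀ X Y : Matrix (Fin 2) (Fin 2) ℤ, IsUnit Y.det → SemiconjBy B X Y →
      displacement X ≤ displacement Y + C := by
  have hB' : IsUnit B⁻¹.det := isUnit_nonsing_inv_det B hB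
  obtain ⟨C, hC⟩ := ENat.ne_top_iff_exists.mp (displacement_ne_top hB)
  obtain ⟨C', hC'⟩ := ENat.ne_top_iff_exists.mp (displacement_ne_top hB')
  refine ⟨C' + C, fun X Y hY h => ?_⟩
  calc displacement X
      = displacement (B⁻¹ * (Y * B)) := by rw [← h.eq, nonsing_inv_mul_cancel_left _ _ hB]
    _ ≤ displacement B⁻¹ + (displacement Y + displacement B) :=
        (displacement_mul_le hB' _).trans (add_le_add le_rfl (displacement_mul_le hY _))
    _ = displacement Y + (C' + C : ℕ) := by rw [← hC, ← hC', Nat.cast_add, add_left_comm]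

theorem isUnit_det_M (c : ℤ) : IsUnit (M c).det := by simp [M]

theorem M_mulVec (c : ℤ) (v : Fin 2 → ℤ) : M c *ᵥ v = ![c * v 0 - v 1, v 0] := by
  ext i
  fin_cases i <;> simp [M, mulVec, dotProduct, Fin.sum_univ_two, sub_eq_add_neg]

theorem Mseq_append (l l' : List ℤ) : Mseq (l ++ l') = Mseq l * Mseq l' := by
  rw [Mseq, List.map_append, List.prod_append, Mseq, Mseq]

theorem Mseq_cons (c : ℤ) (l : List ℤ) : Mseq (c :: l) = M c * Mseq l := List.prod_cons

theorem isUnit_det_Mseq (l : List ℤ) : IsUnit (Mseq l).det := by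
  induction l with
  | nil => simp [Mseq]
  | cons c l ih =>
    rw [Mseq_cons, det_mul]
    exact (isUnit_det_M c).mul ih

theorem displacement_Mseq_le (l : List ℤ) : displacement (Mseq l) ≤ l.length := by
  induction l with
  | nil => exact displacement_one.le
  | cons c l ih =>
    have hM : displacement (M c) ≤ 1 := by
      refine SimpleGraph.edist_le_one_iff_adj_or_eq.mpr (.inl ?_)
      rw [M_mulVec]
      simp [fareyGraph_adj]
    calc displacement (Mseq (c :: l))
        ≤ displacement (M c) + displacement (Mseq l) := by
          rw [Mseq_cons]
          exact displacement_mul_le (isUnit_det_M c) _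
      _ ≤ 1 + l.length := add_le_add hM ih
      _ = ((c :: l).length : ℕ) := by rw [List.length_cons, Nat.cast_succ, add_comm]

theorem displacement_Mseq_pow_le (l : List ℤ) (k : ℕ) :
    displacement (Mseq l ^ k) ≤ ((k * l.length : ℕ) : ℕ∞) := by
  rw [Nat.cast_mul]
  exact (displacement_pow_le (isUnit_det_Mseq l) k).trans
    (mul_le_mul_right (displacement_Mseq_le l) _)

/-! ### Sectors around infinity -/

/-- The nonzero vectors whose slope `v 0 / v 1` lies in `[α, ∞] ∪ [-∞, -β]`, with denominators
cleared. -/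
def sector (α β : ℤ) : Set (Fin 2 → ℤ) :=
  {v | v ≠ 0 ∧ (α * v 1 ^ 2 ≤ v 0 * v 1 ∨ v 0 * v 1 ≤ -β * v 1 ^ 2)}

/-- The vectors whose slope `v 0 / v 1` lies in `(α, ∞) ∪ (-∞, -β)`; the slope `∞` is excluded. -/
def openSector (α β : ℤ) : Set (Fin 2 → ℤ) :=
  {v | α * v 1 ^ 2 < v 0 * v 1 ∨ v 0 * v 1 < -β * v 1 ^ 2}

theorem infinity_mem_sector (α β : ℤ) : ![1, 0] ∈ sector α β := by
  simp [sector]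

theorem infinity_notMem_openSector (α β : ℤ) : ![1, 0] ∉ openSector α β := by
  simp [openSector]

theorem openSector_subset_sector (α β : ℤ) : openSector α β ⊆ sector α β := by
  refine fun v hv => ⟨?_, hv.imp le_of_lt le_of_lt⟩
  rintro rfl
  simp [openSector] at hv

theorem mul_nonneg_of_isUnit_det {x y z w : ℤ} (hxy : 0 < x * y) (h : IsUnit (x * w - y * z)) :
    0 ≤ z * w := by
  by_contra! hzw
  have hsq : (x * w - y * z) ^ 2 = 1 := Int.isUnit_sq h
  -- `(x w - y z)² = (x w + y z)² - 4 (x y) (z w) ≥ 4`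
  nlinarith [sq_nonneg (x * w + y * z), mul_pos hxy (neg_pos.mpr hzw)]

theorem mem_sector_of_adj {α β : ℤ} {u v : Fin 2 → ℤ} (hu : u ∈ openSector α β)
    (huv : fareyGraph.Adj u v) : v ∈ sector α β := by
  refine ⟨?_, ?_⟩
  · rintro rfl
    simp [fareyGraph_adj] at huv
  · rw [fareyGraph_adj] at huv
    refine hu.imp (fun h => ?_) (fun h => ?_)
    · have hquad : 0 ≤ v 1 * (v 0 - α * v 1) :=
        mul_nonneg_of_isUnit_det (x := u 1) (y := u 0 - α * u 1) (by linarith)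
          (by rw [← IsUnit.neg_iff]; convert huv using 1; ring)
      linarith
    · have hquad : 0 ≤ v 1 * (-v 0 - β * v 1) :=
        mul_nonneg_of_isUnit_det (x := u 1) (y := -u 0 - β * u 1) (by linarith)
          (by convert huv using 1; ring)
      linarith

/-- On slopes `t = r / s`: if `t ∈ [α', ∞] ∪ [-∞, -β']` then `1 / t ≤ 1 / α' < δ`. -/
theorem mul_lt_mul_sq_of_sector {r s α' β' δ : ℤ} (hα' : 0 < α') (hβ' : 0 < β') (hδ : 1 < δ * α')
    (hne : r ≠ 0 ∨ s ≠ 0) (h : α' * s ^ 2 ≤ r * s ∨ r * s ≤ -β' * s ^ 2) : r * s < δ * r ^ 2 := by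
  have hr : r ≠ 0 := by
    rintro rfl
    have hs : 0 < s ^ 2 := sq_pos_of_ne_zero (hne.resolve_left (by simp))
    rcases h with h | h <;> nlinarith
  have hr2 : 0 < r ^ 2 := sq_pos_of_ne_zero hr
  rcases h with h | h
  · have hle : α' * (r * s) ≤ r ^ 2 := by
      nlinarith [sq_nonneg (r - α' * s)]
    nlinarith
  · have hδ0 : 0 < δ := by nlinarith
    nlinarith [mul_pos hδ0 hr2, mul_nonneg hβ'.le (sq_nonneg s)]

theorem M_mulVec_mem_openSector {c α β α' β' : ℤ} (hα' : 0 < α') (hβ' : 0 < β')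
    (hc : 1 < (c - α) * α' ∨ 1 < (-c - β) * β') {v : Fin 2 → ℤ} (hv : v ∈ sector α' β') :
    M c *ᵥ v ∈ openSector α β := by
  obtain ⟨hne, hsector⟩ := hv
  have hcoord : v 0 ≠ 0 ∨ v 1 ≠ 0 := by
    contrapose! hne
    ext i
    fin_cases i
    exacts [hne.1, hne.2]
  rw [M_mulVec]
  refine hc.imp (fun hpos => ?_) (fun hneg => ?_)
  · have hlt := mul_lt_mul_sq_of_sector hα' hβ' hpos hcoord hsector
    simp only [cons_val_zero, cons_val_one]
    linarith
  · have hlt := mul_lt_mul_sq_of_sector (r := -v 0) (s := v 1) hβ' hα' hneg (by rwa [neg_ne_zero])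
      (hsector.symm.imp (fun h => by linarith) (fun h => by linarith))
    simp only [cons_val_zero, cons_val_one]
    linarith

/-! ### Sequences without closed blocks -/

/-- The sequence `f` contains no block `x, y, …, y, x`, where the number of `y`'s may be zero. -/
def BlockFree {α : Type*} (f : ℕ → α) (x y : α) : Prop :=
  ∀ i j, i < j → f i = x → (∀ t, i < t → t < j → f t = y) → f j ≠ x

/-- The threshold in front of position `i`: it is `2` right after a block `2, 3, …, 3`, and `1`
otherwise. -/
def threshold (f : ℕ → ℤ) : ℕ → ℤ
  | 0 => 1
  | i + 1 => if f i = 2 then 2 else if f i = 3 then threshold f i else 1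

theorem threshold_eq_one_or_two (f : ℕ → ℤ) (i : ℕ) : threshold f i = 1 ∨ threshold f i = 2 := by
  induction i with
  | zero => exact .inl rfl
  | succ i ih =>
    rw [threshold]
    split_ifs
    exacts [.inr rfl, ih, .inl rfl]

theorem threshold_pos (f : ℕ → ℤ) (i : ℕ) : 0 < threshold f i := by
  rcases threshold_eq_one_or_two f i with h | h <;> omega

theorem exists_block_of_threshold_eq_two {f : ℕ → ℤ} {i : ℕ} (h : threshold f i = 2) :
    ∃ j < i, f j = 2 ∧ ∀ t, j < t → t < i → f t = 3 := by
  induction i with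
  | zero => simp [threshold] at h
  | succ i ih =>
    rw [threshold] at h
    split_ifs at h with h2 h3
    · exact ⟨i, i.lt_succ_self, h2, fun t _ _ => by omega⟩
    · obtain ⟨j, hj, hfj, hblock⟩ := ih h
      refine ⟨j, by omega, hfj, fun t hjt hti => ?_⟩
      rcases Nat.lt_succ_iff_lt_or_eq.mp hti with hti | rfl
      exacts [hblock t hjt hti, h3]
    · omega

/-- Only an entry `2` at a threshold of `2` fails this condition of `M_mulVec_mem_openSector`. -/
theorem one_lt_sub_threshold_mul {f : ℕ → ℤ} (hf : BlockFree f 2 3) {i : ℕ} (hi : 2 ≤ f i) :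
    1 < (f i - threshold f i) * threshold f (i + 1) := by
  have hclosed : threshold f i = 2 → f i ≠ 2 := fun h => by
    obtain ⟨j, hj, hfj, hblock⟩ := exists_block_of_threshold_eq_two h
    exact hf j i hj hfj hblock
  rw [threshold]
  rcases threshold_eq_one_or_two f i with h | h <;> simp only [h] at hclosed ⊢ <;>
    split_ifs <;> grind

/-! ### Displacement along block-free sequences -/

/-- The product `M(f 0)⋯M(f (i - 1))`. -/
def prefixProd (f : ℕ → ℤ) (i : ℕ) : Matrix (Fin 2) (Fin 2) ℤ := Mseq ((List.range i).map f)

theorem prefixProd_succ (f : ℕ → ℤ) (i : ℕ) : prefixProd f (i + 1) = prefixProd f i * M (f i) := by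
  rw [prefixProd, List.range_succ, List.map_append, Mseq_append, prefixProd]
  simp [Mseq]

/-- The `i`-th region of the ping-pong argument. -/
def shadow (f : ℕ → ℤ) (i : ℕ) : Set (Fin 2 → ℤ) :=
  (prefixProd f i *ᵥ ·) '' sector (threshold f i) (threshold (-f) i)

section Shadow

variable {f : ℕ → ℤ}

theorem shadow_succ_subset (hf : ∀ i, f i ≠ -1 ∧ f i ≠ 0 ∧ f i ≠ 1) (hpos : BlockFree f 2 3)
    (hneg : BlockFree f (-2) (-3)) (i : ℕ) :
    shadow f (i + 1) ⊆
      (prefixProd f i *ᵥ ·) '' openSector (threshold f i) (threshold (-f) i) := by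
  rintro _ ⟨w, hw, rfl⟩
  refine ⟨M (f i) *ᵥ w, ?_, by simp only [mulVec_mulVec, prefixProd_succ]⟩
  refine M_mulVec_mem_openSector (threshold_pos _ _) (threshold_pos _ _) ?_ hw
  have hneg' : BlockFree (-f) 2 3 := fun j k hjk hj hblock hk =>
    hneg j k hjk (neg_eq_iff_eq_neg.mp hj) (fun t h₁ h₂ => neg_eq_iff_eq_neg.mp (hblock t h₁ h₂))
      (neg_eq_iff_eq_neg.mp hk)
  have hi := hf i
  rcases (by omega : 2 ≤ f i ∨ 2 ≤ -f i) with h | h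
  · exact .inl (one_lt_sub_threshold_mul hpos h)
  · exact .inr (one_lt_sub_threshold_mul hneg' h)

theorem le_displacement_prefixProd (hf : ∀ i, f i ≠ -1 ∧ f i ≠ 0 ∧ f i ≠ 1) (hpos : BlockFree f 2 3)
    (hneg : BlockFree f (-2) (-3)) (n : ℕ) : (n : ℕ∞) ≤ displacement (prefixProd f n) := by
  have hsubset := shadow_succ_subset hf hpos hneg
  rw [displacement, SimpleGraph.edist_comm]
  refine le_edist_of_antitone (S := shadow f)
    (antitone_nat_of_succ_le fun i =>
      (hsubset i).trans (Set.image_mono (openSector_subset_sector _ _))) ?_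
    ⟨_, infinity_mem_sector _ _, rfl⟩ ?_
  · rintro i u v hu huv
    obtain ⟨w, hw, rfl⟩ := hsubset i hu
    have hP : IsUnit (prefixProd f i).det := isUnit_det_Mseq _
    have hv : prefixProd f i *ᵥ ((prefixProd f i)⁻¹ *ᵥ v) = v := by
      rw [mulVec_mulVec, mul_nonsing_inv _ hP, one_mulVec]
    rw [← hv] at huv ⊢
    exact ⟨_, mem_sector_of_adj hw ((fareyGraph_adj_mulVec hP).mp huv), rfl⟩
  · intro hmem
    obtain ⟨w, hw, hw'⟩ := hsubset 0 hmem
    have hone : prefixProd f 0 = 1 := rfl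
    simp only [hone, one_mulVec] at hw'
    exact infinity_notMem_openSector _ _ (hw' ▸ hw)

end Shadow

/-! ### Periodic sequences -/

section Periodize

variable {α : Type*} [Inhabited α]

/-- The periodic sequence `a₀, …, aₙ₋₁, a₀, …` obtained by repeating the list `a`. It is constantly
`default` if `a` is empty. -/
def periodize (a : List α) (i : ℕ) : α := a[i % a.length]!

theorem map_periodize_range' (a : List α) (j : ℕ) :
    (List.range' j a.length).map (periodize a) = a.rotate j := by
  refine List.ext_getElem (by simp) fun t ht _ => ?_
  have hlt : (t + j) % a.length < a.length := Nat.mod_lt _ (by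
    simp only [List.length_map, List.length_range'] at ht
    omega)
  simp only [List.getElem_map, List.getElem_range', List.getElem_rotate, periodize, one_mul,
    add_comm j t]
  exact getElem!_pos a _ hlt

theorem periodize_add_length (a : List α) (i : ℕ) :
    periodize a (i + a.length) = periodize a i := by
  rw [periodize, Nat.add_mod_right, periodize]

theorem periodize_mem {a : List α} (ha : a ≠ []) (i : ℕ) : periodize a i ∈ a := by
  have hlt : i % a.length < a.length := Nat.mod_lt _ (List.length_pos_of_ne_nil ha)
  rw [periodize, getElem!_pos a _ hlt]
  exact List.getElem_mem hlt

theorem blockFree_periodize {a : List α} {x y : α} (ha : a ≠ []) (hxy : x ≠ y)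
    (hblock : ∀ (k l : ℕ) (t : List α), a.rotate k ≠ x :: (List.replicate l y ++ x :: t))
    (hfull : ∀ k l : ℕ, a.rotate k ≠ x :: List.replicate l y) : BlockFree (periodize a) x y := by
  intro i j hij hi hmid hj
  have hpos := List.length_pos_of_ne_nil ha
  have hrep : ∀ l, i + l < j →
      (List.range' (i + 1) l).map (periodize a) = List.replicate l y := by
    intro l hl
    rw [List.map_eq_replicate_iff.mpr, List.length_range']
    intro t ht
    rw [List.mem_range'_1] at ht
    exact hmid t (by omega) (by omega)
  rcases lt_or_ge (j - i) a.length with hlt | hge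
  · obtain ⟨l, rfl⟩ := Nat.exists_eq_add_of_lt hij
    obtain ⟨r, hr⟩ := Nat.exists_eq_add_of_le (show l + 2 ≤ a.length by omega)
    refine hblock i l ((List.range' (i + l + 2) r).map (periodize a)) ?_
    have hsplit : List.range' i a.length =
        i :: (List.range' (i + 1) l ++ (i + l + 1) :: List.range' (i + l + 2) r) := by
      rw [hr, show l + 2 + r = l + (r + 1) + 1 by omega, List.range'_succ, ← List.range'_append_1,
        List.range'_succ, add_right_comm i 1 l]
    rw [← map_periodize_range', hsplit, List.map_cons, List.map_append, List.map_cons, hi, hj,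
      hrep l (by omega)]
  · have hlast : j ≤ i + a.length := by
      by_contra! h
      exact hxy (by rw [← hi, ← periodize_add_length, hmid _ (by omega) h])
    obtain rfl : j = i + a.length := le_antisymm hlast (by omega)
    refine hfull i (a.length - 1) ?_
    rw [← map_periodize_range', ← hrep _ (by omega), ← hi, ← List.map_cons, ← List.range'_succ,
      Nat.sub_add_cancel hpos]

end Periodize

theorem prefixProd_periodize (a : List ℤ) (k : ℕ) :
    prefixProd (periodize a) (k * a.length) = Mseq a ^ k := by
  induction k with
  | zero => rw [zero_mul, pow_zero]; rfl
  | succ k ih =>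
    have hsplit : List.range ((k + 1) * a.length) =
        List.range (k * a.length) ++ List.range' (k * a.length) a.length := by
      rw [List.range_eq_range', List.range_eq_range', add_one_mul]
      simpa using (List.range'_append_1 (s := 0) (m := k * a.length) (n := a.length)).symm
    rw [prefixProd, hsplit, List.map_append, Mseq_append, map_periodize_range', mul_comm k,
      List.rotate_length_mul, pow_succ, ← ih, prefixProd, mul_comm k]

theorem Proper.mul_length_le_displacement_pow {a : List ℤ} (ha : Proper a) (k : ℕ) :
    ((k * a.length : ℕ) : ℕ∞) ≤ displacement (Mseq a ^ k) := by
  obtain rfl | hne := eq_or_ne a []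
  · simp
  obtain ⟨hentries, hpos, hneg, hpos', hneg'⟩ := ha
  rw [← prefixProd_periodize]
  exact le_displacement_prefixProd (fun i => hentries _ (periodize_mem hne i))
    (blockFree_periodize hne (by decide) hpos hpos')
    (blockFree_periodize hne (by decide) hneg hneg') _

theorem smul_sq_of_sign {R : Type*} [Ring R] {ε : ℤ} (hε : ε = 1 ∨ ε = -1) (x : R) :
    (ε • x) ^ 2 = x ^ 2 := by
  rcases hε with rfl | rfl <;> simp

theorem proper_minimal_in_conjugacy_class_general (a : List ℤ) (hproper : Proper a)
    (A : Matrix (Fin 2) (Fin 2) ℤ) (ε : ℤ) (hε : ε = 1 ∨ ε = -1) (hA : A = ε • Mseq a) :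
    ∀ B : Matrix (Fin 2) (Fin 2) ℤ, IsUnit B.det →
      ∀ (d : List ℤ) (ε' : ℤ), (ε' = 1 ∨ ε' = -1) →
        B * A * B⁻¹ = ε' • Mseq d → a.length ≤ d.length := by
  intro B hB d ε' hε' hconj
  -- Squaring removes both signs.
  have hsq : SemiconjBy B (Mseq a ^ 2) (Mseq d ^ 2) := by
    have hsemi : SemiconjBy B A (ε' • Mseq d) := by
      rw [SemiconjBy, ← hconj, nonsing_inv_mul_cancel_right _ _ hB]
    have hsemi_sq := hsemi.pow_right 2
    rwa [hA, smul_sq_of_sign hε, smul_sq_of_sign hε'] at hsemi_sq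
  obtain ⟨C, hC⟩ := exists_displacement_le_add_of_semiconjBy hB
  have hbound : ∀ k : ℕ, 2 * k * a.length ≤ 2 * k * d.length + C := fun k => by
    have hdet : IsUnit (Mseq d ^ (2 * k)).det := by
      rw [det_pow]
      exact (isUnit_det_Mseq d).pow _
    have hpow : SemiconjBy B (Mseq a ^ (2 * k)) (Mseq d ^ (2 * k)) := by
      simpa only [pow_mul] using hsq.pow_right k
    have hle := (hproper.mul_length_le_displacement_pow (2 * k)).trans (hC _ _ hdet hpow)
    have hd : displacement (Mseq d ^ (2 * k)) ≤ ((2 * k * d.length : ℕ) : ℕ∞) :=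
      displacement_Mseq_pow_le d (2 * k)
    exact_mod_cast hle.trans (add_le_add hd le_rfl)
  by_contra! hlt
  nlinarith [hbound (C + 1)]

/-- A proper presentation (of length at least 3) of a matrix `A ∈ SL(2,ℤ)` is minimal
for the whole conjugacy class of `A` in `PSL(2,ℤ)`: if `B·A·B⁻¹ = ε'·M(d₁,…,d_m)` with
`B ∈ SL(2,ℤ)` and `ε' ∈ {1,−1}`, then `m ≥ n`. -/
theorem proper_minimal_in_conjugacy_class (a : List ℤ) (hn : 3 ≤ a.length)
    (hproper : Proper a) (A : Matrix (Fin 2) (Fin 2) ℤ)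
    (ε : ℤ) (hε : ε = 1 ∨ ε = -1) (hA : A = ε • Mseq a) :
    ∀ B : Matrix (Fin 2) (Fin 2) ℤ, B.det = 1 →
      ∀ (d : List ℤ) (ε' : ℤ), (ε' = 1 ∨ ε' = -1) →
        B * A * B⁻¹ = ε' • Mseq d → a.length ≤ d.length :=
  fun B hB =>
    proper_minimal_in_conjugacy_class_general a hproper A ε hε hA B (hB ▸ isUnit_one)
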